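/- Let m, n be positive integers with n ≤ m, let ‖·‖ be a norm on ℝ^m, and let Q_1, …, Q_n be a generalized QR system for ‖·‖. Then for every x ∈ ℝ^n, ‖Σ_{j=1}^n x_j Q_j‖ ≥ 2^{−n} max_{1 ≤ j ≤ n} |x_j|. -/

import Mathlib

/-!
Write `s = p + a • Q_last`, where `p` collects the terms before the last one. Since `p` lies in the
span of the earlier vectors, the QR condition gives `|a| ≤ N s` (`GenQRSystem.abs_last_le`), and the
triangle inequality then gives `N p ≤ N s + |a| ≤ 2 * N s`. Thus dropping the last term at most
doubles the norm, and induction on the number of vectors bounds every coefficient by `2 ^ n * N s`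
(`abs_coeff_le`).
-/

/-- `N` is a norm on `ℝ^m`. -/
def IsNorm {m : ℕ} (N : (Fin m → ℝ) → ℝ) : Prop :=
  (∀ x, N x = 0 ↔ x = 0) ∧
  (∀ (a : ℝ) (x : Fin m → ℝ), N (a • x) = |a| * N x) ∧
  (∀ x y : Fin m → ℝ, N (x + y) ≤ N x + N y)

/-- `Q 0, …, Q (n-1)` is a generalized QR system for the norm `N` on `ℝ^m`:
every `Q j` has `N`-norm one, and for every `k` and every `w` in the linear span of
the previous vectors `Q j`, `j < k`, we have `N (Q k - w) ≥ 1`. -/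
def GenQRSystem {m n : ℕ} (N : (Fin m → ℝ) → ℝ) (Q : Fin n → Fin m → ℝ) : Prop :=
  (∀ j, N (Q j) = 1) ∧
  ∀ k : Fin n, ∀ w ∈ Submodule.span ℝ (Q '' {j | j < k}), 1 ≤ N (Q k - w)

lemma IsNorm.nonneg {m : ℕ} {N : (Fin m → ℝ) → ℝ} (hN : IsNorm N) (v : Fin m → ℝ) :
    0 ≤ N v := by
  obtain ⟨h0, hs, ht⟩ := hN
  have h1 := ht v ((-1 : ℝ) • v)
  have h2 : v + (-1 : ℝ) • v = 0 := by simp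
  rw [h2, (h0 0).2 rfl, hs] at h1
  norm_num at h1
  linarith

lemma GenQRSystem.castSucc {m n : ℕ} {N : (Fin m → ℝ) → ℝ} {Q : Fin (n + 1) → Fin m → ℝ}
    (hQ : GenQRSystem N Q) : GenQRSystem N (fun i : Fin n => Q i.castSucc) := by
  refine ⟨fun j => hQ.1 _, fun k w hw => hQ.2 k.castSucc w (Submodule.span_mono ?_ hw)⟩
  rintro _ ⟨j, hj, rfl⟩
  exact ⟨j.castSucc, Fin.castSucc_lt_castSucc_iff.2 hj, rfl⟩

/-- The last coefficient of a combination is bounded by the norm of the combination: dividing by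
it leaves the last vector minus an element of the span of the previous ones. -/
lemma GenQRSystem.abs_last_le {m n : ℕ} {N : (Fin m → ℝ) → ℝ} (hN : IsNorm N)
    {Q : Fin (n + 1) → Fin m → ℝ} (hQ : GenQRSystem N Q) (x : Fin (n + 1) → ℝ) :
    |x (Fin.last n)| ≤ N (∑ j, x j • Q j) := by
  by_cases ha : x (Fin.last n) = 0
  · rw [ha, abs_zero]
    exact hN.nonneg _
  · set p := ∑ i : Fin n, x i.castSucc • Q i.castSucc with hp
    have hmem : p ∈ Submodule.span ℝ (Q '' {j | j < Fin.last n}) :=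
      Submodule.sum_mem _ fun i _ => Submodule.smul_mem _ _
        (Submodule.subset_span ⟨i.castSucc, Fin.castSucc_lt_last i, rfl⟩)
    have h1 := hQ.2 (Fin.last n) _ (Submodule.smul_mem _ (-(x (Fin.last n))⁻¹) hmem)
    have hs : ∑ j, x j • Q j
        = x (Fin.last n) • (Q (Fin.last n) - (-(x (Fin.last n))⁻¹) • p) := by
      rw [Fin.sum_univ_castSucc, ← hp, smul_sub, smul_smul, mul_neg, mul_inv_cancel₀ ha]
      module
    rw [hs, hN.2.1]
    exact le_mul_of_one_le_right (abs_nonneg _) h1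

lemma abs_coeff_le {m : ℕ} {N : (Fin m → ℝ) → ℝ} (hN : IsNorm N) (n : ℕ)
    (Q : Fin n → Fin m → ℝ) (hQ : GenQRSystem N Q) (x : Fin n → ℝ) (j : Fin n) :
    |x j| ≤ 2 ^ n * N (∑ j, x j • Q j) := by
  induction n with
  | zero => exact j.elim0
  | succ n ih =>
    have hlast := hQ.abs_last_le hN x
    have hnn := hN.nonneg (∑ j, x j • Q j)
    induction j using Fin.lastCases with
    | last =>
      exact hlast.trans (le_mul_of_one_le_left hnn (one_le_pow₀ one_le_two))
    | cast i =>
      have h1 := ih _ hQ.castSucc (fun i => x i.castSucc) i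
      have h2 : N (∑ i : Fin n, x i.castSucc • Q i.castSucc) ≤ 2 * N (∑ j, x j • Q j) := by
        have h3 := hN.2.2 (∑ j, x j • Q j) ((-x (Fin.last n)) • Q (Fin.last n))
        rw [hN.2.1, hQ.1, abs_neg] at h3
        have h4 : ∑ j, x j • Q j + (-x (Fin.last n)) • Q (Fin.last n)
            = ∑ i : Fin n, x i.castSucc • Q i.castSucc := by
          rw [Fin.sum_univ_castSucc]
          module
        rw [h4] at h3
        linarith
      calc |x i.castSucc| ≤ 2 ^ n * N (∑ i : Fin n, x i.castSucc • Q i.castSucc) := h1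
        _ ≤ 2 ^ n * (2 * N (∑ j, x j • Q j)) := by gcongr
        _ = 2 ^ (n + 1) * N (∑ j, x j • Q j) := by ring

/-- Inverse bound for the thin factor: for a generalized QR system `Q₀, …, Q_{n-1}` in
`ℝ^m` (`n ≤ m`) and every `x ∈ ℝ^n`,
`N (Σ_j x_j Q_j) ≥ 2^{-n} max_j |x_j|`. Here `‖x‖` is the sup norm on `Fin n → ℝ`. -/
theorem inverse_bound_rect {m n : ℕ} (hm : 0 < m) (hn : 0 < n) (hnm : n ≤ m)
    (N : (Fin m → ℝ) → ℝ) (hN : IsNorm N)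
    (Q : Fin n → Fin m → ℝ) (hQ : GenQRSystem N Q)
    (x : Fin n → ℝ) :
    (2 : ℝ)⁻¹ ^ n * ‖x‖ ≤ N (∑ j, x j • Q j) := by
  have h := abs_coeff_le hN n Q hQ x
  have hx : ‖x‖ ≤ 2 ^ n * N (∑ j, x j • Q j) :=
    (pi_norm_le_iff_of_nonneg (mul_nonneg (by positivity) (hN.nonneg _))).2 h
  rw [inv_pow]
  exact (inv_mul_le_iff₀ (by positivity)).2 hx
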